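/- arXiv:2605.21877 — 3 statements merged into one kernel-verified Lean document; each statement's English description precedes it below -/
import Mathlib

section
/- Let F := K4⁻ × F*. Then the Turán density of F equals 2/9; that is, ex(n,{F})/C(n,3) → 2/9 as n → ∞. Equivalently: for every ε > 0 there is N such that for all n ≥ N, (2/9 − ε)·C(n,3) ≤ ex(n,{F}) ≤ (2/9 + ε)·C(n,3). -/
open scoped Classical

/-- A collection of finite edge sets is a 3-graph if every edge has exactly 3 vertices. -/
def IsThreeGraph {α : Type*} (H : Set (Finset α)) : Prop := ∀ e ∈ H, e.card = 3

/-- `φ` is a homomorphism of 3-graphs from `G` to `H`: the image of every edge of `G`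
is a 3-element set that is an edge of `H`. -/
def IsHomOn {α β : Type*} (G : Set (Finset α)) (H : Set (Finset β)) (φ : α → β) : Prop :=
  ∀ e ∈ G, (e.image φ).card = 3 ∧ e.image φ ∈ H

/-- `H` contains a subgraph isomorphic to `G`. -/
def ContainsCopy {α β : Type*} (G : Set (Finset α)) (H : Set (Finset β)) : Prop :=
  ∃ φ : α → β, Function.Injective φ ∧ ∀ e ∈ G, e.image φ ∈ H

/-- `K4⁻`, on vertices `a=0, b=1, c=2, d=3`, with edges `abc, abd, acd`. -/
def K4minus : Set (Finset (Fin 4)) := {{0,1,2}, {0,1,3}, {0,2,3}}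

/-- `F*`, on vertices `1,…,7` (represented by `0,…,6`), with edges `123, 124, 345, 156, 257`. -/
def Fstar : Set (Finset (Fin 7)) := {{0,1,2}, {0,1,3}, {2,3,4}, {0,4,5}, {1,4,6}}

/-- The categorical product of two 3-graphs: a 3-element set of pairs is an edge iff
its set of first coordinates is an edge of `G` and its set of second coordinates is an
edge of `H`. -/
def ProdGraph {α β : Type*} (G : Set (Finset α)) (H : Set (Finset β)) :
    Set (Finset (α × β)) :=
  {e | e.card = 3 ∧ e.image Prod.fst ∈ G ∧ e.image Prod.snd ∈ H}

/-- The 3-graph `F := K4⁻ × F*`. -/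
def F : Set (Finset (Fin 4 × Fin 7)) := ProdGraph K4minus Fstar

/-- `ex(n, {F})`: the maximum number of edges of an `n`-vertex 3-graph containing no
subgraph isomorphic to `F`. -/
noncomputable def exF (n : ℕ) : ℕ :=
  sSup {k | ∃ H : Set (Finset (Fin n)), IsThreeGraph H ∧ ¬ ContainsCopy F H ∧ H.ncard = k}

/-!
Upper bound: a weighting that maximises the Lagrangian of `H` with minimal support covers pairs: any
two vertices of its support lie in an edge inside the support, since otherwise weight could be
shifted from one to the other. If neither `K4⁻` nor `F*` maps to `H`, then two edges inside the
support cannot share two vertices `a, b`: covering the pair of their remaining vertices, and then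
the pairs formed by the third vertex `x` of that edge with `a` and with `b`, produces a homomorphic
image of `K4⁻` or `F*`. The derivative in the direction of a heaviest vertex `i` is therefore a sum
of products over disjoint pairs, hence at most `min (x i / 2) ((1 - x i) / 4) * (1 - x i) ≤ 1 / 9`,
and the Lagrangian is at most `1 / 27`. So a 3-graph of density above `2 / 9` admits a homomorphism
from `K4⁻` or `F*`, hence from their product, and by supersaturation a large one contains a copy of
the product.

Lower bound: the balanced complete tripartite 3-graph is a blow-up of a single edge, so it suffices
that no 3-colouring of `K4⁻ × F*` makes every edge rainbow. Every edge of `K4⁻` contains the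
vertex `0`. If the row of `0` repeats a colour on some edge of `F*`, then for any `b` in this edge
the column of `b` is a rainbow colouring of `K4⁻`; otherwise that row is a rainbow colouring of
`F*`. Neither exists.
-/

section Expectation
open Finset
open scoped BigOperators

variable {ι κ V T : Type*} [Fintype ι] [Fintype κ] [Fintype V] [Fintype T]

lemma pow_expect_le_expect_pow [Nonempty ι] {f : ι → ℝ} (hf : ∀ i, 0 ≤ f i) (n : ℕ) :
    (𝔼 i, f i) ^ n ≤ 𝔼 i, f i ^ n := by
  simp only [Fintype.expect_eq_sum_div_card, div_eq_inv_mul, mul_sum]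
  exact Real.pow_arith_mean_le_arith_mean_pow univ (fun _ => (Fintype.card ι : ℝ)⁻¹) f
    (fun _ _ => by positivity) (by simp) (fun i _ => hf i) n

lemma prod_fin_succ_pi {k : ℕ} (f : (Fin (k + 1) → T) → ℝ) :
    ∏ s, f s = ∏ s, ∏ t, f (Fin.cons t s) := by
  rw [← Fintype.prod_equiv (Fin.consEquiv fun _ => T) (fun p => f (Fin.cons p.1 p.2)) f
    fun _ => rfl, Fintype.prod_prod_type_right]

variable [DecidableEq ι] [DecidableEq κ] [DecidableEq T]

lemma expect_comp_of_injective [Nonempty V] {g : κ → ι} (hg : g.Injective) (f : (κ → V) → ℝ) :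
    𝔼 x : ι → V, f (x ∘ g) = 𝔼 z, f z := by
  let e : κ ⊕ ↥(Set.range g)ᶜ ≃ ι :=
    ((Equiv.ofInjective g hg).sumCongr (Equiv.refl _)).trans (Equiv.Set.sumCompl _)
  calc 𝔼 x : ι → V, f (x ∘ g)
      = 𝔼 p : (κ → V) × (↥(Set.range g)ᶜ → V), f p.1 :=
        Fintype.expect_equiv
          ((e.symm.arrowCongr (Equiv.refl V)).trans (Equiv.sumArrowEquivProdArrow _ _ _)) _ _
          fun _ => rfl
    _ = 𝔼 z, f z := by
        rw [← univ_product_univ, expect_product]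
        simp only [Fintype.expect_const]

lemma expect_pow_card (f : V → ℝ) :
    (𝔼 v, f v) ^ Fintype.card T = 𝔼 w : T → V, ∏ t, f (w t) := by
  simp only [Fintype.expect_eq_sum_div_card, div_pow, Fintype.card_fun, Nat.cast_pow]
  rw [← card_univ (α := T), ← prod_const, prod_univ_sum, Fintype.piFinset_univ]

lemma expect_fin_succ_pi {k : ℕ} (f : (Fin (k + 1) → V) → ℝ) :
    𝔼 x, f x = 𝔼 v, 𝔼 x, f (Fin.cons v x) := by
  rw [← Fintype.expect_equiv (Fin.consEquiv fun _ => V) (fun p => f (Fin.cons p.1 p.2)) f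
    fun _ => rfl, ← univ_product_univ, expect_product]

/-- Duplicate one coordinate after another: the first coordinate costs a `card T`-th power by
Jensen's inequality, the remaining ones are handled by induction for each fixed choice of its
copies, and Jensen's inequality averages over these choices. -/
theorem expect_pow_le_expect_prod_sections [Nonempty V] :
    ∀ (k : ℕ) (f : (Fin k → V) → ℝ), (∀ x, 0 ≤ f x) →
      (𝔼 x, f x) ^ Fintype.card T ^ k ≤
        𝔼 y : Fin k → T → V, ∏ s : Fin k → T, f fun i => y i (s i)
  | 0, f, _ => by simp [Subsingleton.elim _ (default : Fin 0 → V)]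
  | k + 1, f, hf => by
    set t := Fintype.card T
    calc (𝔼 x, f x) ^ t ^ (k + 1)
        = ((𝔼 x, 𝔼 v, f (Fin.cons v x)) ^ t) ^ t ^ k := by
          rw [expect_fin_succ_pi, expect_comm, pow_succ', pow_mul]
      _ ≤ (𝔼 x, (𝔼 v, f (Fin.cons v x)) ^ t) ^ t ^ k := by
          have hnonneg (x : Fin k → V) : 0 ≤ 𝔼 v, f (Fin.cons v x) :=
            expect_nonneg fun v _ => hf _
          gcongr
          · exact pow_nonneg (expect_nonneg fun x _ => hnonneg x) t
          · exact pow_expect_le_expect_pow hnonneg t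
      _ = (𝔼 w : T → V, 𝔼 x, ∏ j, f (Fin.cons (w j) x)) ^ t ^ k := by
          simp only [t, expect_pow_card]
          rw [expect_comm]
      _ ≤ 𝔼 w : T → V, (𝔼 x, ∏ j, f (Fin.cons (w j) x)) ^ t ^ k :=
          pow_expect_le_expect_pow
            (fun w => expect_nonneg fun x _ => prod_nonneg fun j _ => hf _) _
      _ ≤ 𝔼 w : T → V, 𝔼 y : Fin k → T → V,
            ∏ s : Fin k → T, ∏ j, f (Fin.cons (w j) fun i => y i (s i)) :=
          expect_le_expect fun w _ =>
            expect_pow_le_expect_prod_sections k (fun x => ∏ j, f (Fin.cons (w j) x))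
              fun x => prod_nonneg fun j _ => hf _
      _ = 𝔼 y : Fin (k + 1) → T → V, ∏ s : Fin (k + 1) → T, f fun i => y i (s i) := by
          rw [expect_fin_succ_pi]
          simp only [prod_fin_succ_pi]
          congr! 8 with w _ y _ s _ j _ i
          cases i using Fin.cases <;> rfl

lemma one_sub_sq_div_le_expect_injective [DecidableEq V] [Nonempty V] :
    1 - (Fintype.card κ : ℝ) ^ 2 / Fintype.card V ≤
      𝔼 z : κ → V, if z.Injective then (1 : ℝ) else 0 := by
  set k := Fintype.card κ
  set n := Fintype.card V
  have hn0 : (0 : ℝ) < n := by exact_mod_cast Fintype.card_pos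
  have hcount : 𝔼 z : κ → V, (if z.Injective then (1 : ℝ) else 0) = n.descFactorial k / n ^ k := by
    rw [Fintype.expect_eq_sum_div_card, sum_boole, ← Fintype.card_subtype,
      Fintype.card_congr (Equiv.subtypeInjectiveEquivEmbedding κ V), Fintype.card_embedding_eq,
      Fintype.card_fun, Nat.cast_pow]
  rw [hcount, le_div_iff₀ (by positivity)]
  rcases le_or_gt k n with hkn | hkn
  · calc (1 - (k : ℝ) ^ 2 / n) * n ^ k = (1 + k * -(k / n : ℝ)) * n ^ k := by ring
      _ ≤ (1 + -(k / n : ℝ)) ^ k * n ^ k := by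
          gcongr
          refine one_add_mul_le_pow ?_ k
          have : (k / n : ℝ) ≤ 1 := div_le_one_of_le₀ (by exact_mod_cast hkn) hn0.le
          linarith
      _ = ((n - k : ℕ) : ℝ) ^ k := by
          rw [← mul_pow, Nat.cast_sub hkn]
          congr 1
          field_simp
          ring
      _ ≤ n.descFactorial k := by
          exact_mod_cast (Nat.pow_le_pow_left (by omega) k).trans (Nat.pow_sub_le_descFactorial n k)
  · have : 1 ≤ (k : ℝ) ^ 2 / n := by
      rw [one_le_div hn0]
      exact_mod_cast hkn.le.trans (Nat.le_self_pow two_ne_zero k)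
    exact (mul_nonpos_of_nonpos_of_nonneg (by linarith) (by positivity)).trans (Nat.cast_nonneg _)

lemma exists_injective_of_sq_div_lt_expect [Nonempty V] {g : (κ → V) → ℝ} (hg : ∀ z, g z ≤ 1)
    (h : (Fintype.card κ : ℝ) ^ 2 / Fintype.card V < 𝔼 z, g z) :
    ∃ z, z.Injective ∧ 0 < g z := by
  by_contra! hinj
  have hle : 𝔼 z, g z ≤ 1 - 𝔼 z : κ → V, if z.Injective then (1 : ℝ) else 0 := by
    rw [← Fintype.expect_one (ι := κ → V), ← expect_sub_distrib]
    refine expect_le_expect fun z _ => ?_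
    split_ifs with hz
    · simpa using hinj z hz
    · simpa using hg z
  linarith [one_sub_sq_div_le_expect_injective (κ := κ) (V := V)]

end Expectation

section ThreeGraph

variable {α β γ : Type*}

/-- The blow-up of the 3-graph `H` whose parts are the fibres of `φ`. -/
def pullbackGraph (H : Set (Finset β)) (φ : α → β) : Set (Finset α) :=
  {e | e.card = 3 ∧ e.image φ ∈ H}

lemma isThreeGraph_pullbackGraph (H : Set (Finset β)) (φ : α → β) :
    IsThreeGraph (pullbackGraph H φ) := fun _ he => he.1

lemma IsHomOn.of_image_mem {G : Set (Finset α)} {H : Set (Finset β)} {φ : α → β}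
    (hH : IsThreeGraph H) (h : ∀ e ∈ G, e.image φ ∈ H) : IsHomOn G H φ :=
  fun e he => ⟨hH _ (h e he), h e he⟩

lemma IsHomOn.comp_pullbackGraph {G : Set (Finset α)} {H : Set (Finset γ)} {x : β → γ}
    {φ : α → β} (hH : IsThreeGraph H) (h : IsHomOn G (pullbackGraph H x) φ) :
    IsHomOn G H (x ∘ φ) :=
  .of_image_mem hH fun e he => by
    rw [← Finset.image_image]
    exact (h e he).2.2

lemma image_mem_pullbackGraph_iff {H : Set (Finset γ)} (hH : IsThreeGraph H) {x : β → γ} {g : α → β}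
    {s : Finset α} (hs : s.card = 3) :
    s.image g ∈ pullbackGraph H x ↔ s.image (x ∘ g) ∈ H := by
  rw [pullbackGraph, Set.mem_ofPred_eq, Finset.image_image, and_iff_right_of_imp]
  intro h
  have hinj : Set.InjOn (x ∘ g) s := Finset.card_image_iff.mp ((hH _ h).trans hs.symm)
  rw [Finset.card_image_of_injOn hinj.of_comp, hs]

lemma IsHomOn.comp_fst {G : Set (Finset α)} (G' : Set (Finset β)) {H : Set (Finset γ)} {φ : α → γ}
    (h : IsHomOn G H φ) : IsHomOn (ProdGraph G G') H (φ ∘ Prod.fst) := fun e he => by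
  simpa only [Finset.image_image] using h _ he.2.1

lemma IsHomOn.comp_snd (G : Set (Finset α)) {G' : Set (Finset β)} {H : Set (Finset γ)} {φ : β → γ}
    (h : IsHomOn G' H φ) : IsHomOn (ProdGraph G G') H (φ ∘ Prod.snd) := fun e he => by
  simpa only [Finset.image_image] using h _ he.2.2

lemma isHomOn_K4minus {H : Set (Finset α)} (hH : IsThreeGraph H) {a b c d : α}
    (habc : {a, b, c} ∈ H) (habd : {a, b, d} ∈ H) (hacd : {a, c, d} ∈ H) :
    IsHomOn K4minus H ![a, b, c, d] := by
  apply IsHomOn.of_image_mem hH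
  simp [K4minus, *]

lemma isHomOn_Fstar {H : Set (Finset α)} (hH : IsThreeGraph H) {a b c d x f g : α}
    (habc : {a, b, c} ∈ H) (habd : {a, b, d} ∈ H) (hcdx : {c, d, x} ∈ H)
    (haxf : {a, x, f} ∈ H) (hbxg : {b, x, g} ∈ H) :
    IsHomOn Fstar H ![a, b, c, d, x, f, g] := by
  apply IsHomOn.of_image_mem hH
  simp [Fstar, Finset.image_insert, *]

lemma isHomOn_of_forall_sections {G : Set (Finset α)} {H : Set (Finset γ)} (hG : IsThreeGraph G)
    {c : α → β} {y : β → α → γ}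
    (h : ∀ s : β → α, IsHomOn G H ((fun i => y i (s i)) ∘ c)) :
    IsHomOn G H fun u => y (c u) u := fun e he => by
  obtain ⟨u₀, -⟩ : e.Nonempty := Finset.card_pos.mp (by rw [hG e he]; norm_num)
  have : Nonempty α := ⟨u₀⟩
  have hinj : Set.InjOn c e := by
    have hcard := (h (fun _ => u₀) e he).1.trans (hG e he).symm
    exact (Finset.card_image_iff.mp hcard).of_comp
  have himage : e.image (fun u => y (c u) u) =
      e.image ((fun i => y i (Function.invFunOn c e i)) ∘ c) :=
    Finset.image_congr fun u hu => by
      rw [Function.comp_apply, hinj.leftInvOn_invFunOn hu]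
  rw [himage]
  exact h _ e he

end ThreeGraph

section Tripartite

variable {α β : Type*}

/-- The 3-graph consisting of a single edge. A homomorphism to it is a 3-colouring of the vertices
in which every edge receives all three colours. -/
def singleEdge : Set (Finset (Fin 3)) := {Finset.univ}

lemma isThreeGraph_singleEdge : IsThreeGraph singleEdge := by
  simp [IsThreeGraph, singleEdge]

lemma isHomOn_singleEdge {G : Set (Finset α)} (hG : IsThreeGraph G) {φ : α → Fin 3} :
    IsHomOn G singleEdge φ ↔ ∀ e ∈ G, Set.InjOn φ e := by
  refine forall₂_congr fun e he => ?_
  rw [singleEdge, Set.mem_singleton_iff, ← Finset.card_eq_iff_eq_univ, Fintype.card_fin, and_self,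
    ← Finset.card_image_iff, hG e he]
  congr!

/-- If a row repeats a colour, then this colour occurs in no other row, and likewise for columns. So
if both the row of `a` and the column of `b` repeat a colour, then away from them only the third
colour is left. -/
lemma injOn_row_or_injOn_column {e : Finset α} {f : Finset β} (he : 2 < e.card) (hf : 2 < f.card)
    {c : α × β → Fin 3}
    (hc : ∀ i ∈ e, ∀ i' ∈ e, ∀ j ∈ f, ∀ j' ∈ f, i ≠ i' → j ≠ j' → c (i, j) ≠ c (i', j'))
    {a : α} (ha : a ∈ e) {b : β} (hb : b ∈ f) :
    Set.InjOn (fun j => c (a, j)) f ∨ Set.InjOn (fun i => c (i, b)) e := by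
  simp only [Set.InjOn, Finset.mem_coe]
  by_contra! ⟨⟨j₁, hj₁, j₂, hj₂, hrow, hj⟩, ⟨i₁, hi₁, i₂, hi₂, hcol, hi⟩⟩
  have hrow_ne : ∀ i ∈ e, i ≠ a → ∀ j ∈ f, c (i, j) ≠ c (a, j₁) := fun i hie hia j hjf => by
    rcases eq_or_ne j j₁ with rfl | hjj
    · exact hrow ▸ hc i hie a ha j hjf j₂ hj₂ hia hj
    · exact hc i hie a ha j hjf j₁ hj₁ hia hjj
  have hcol_ne : ∀ j ∈ f, j ≠ b → ∀ i ∈ e, c (i, j) ≠ c (i₁, b) := fun j hjf hjb i hie => by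
    rcases eq_or_ne i i₁ with rfl | hii
    · exact hcol ▸ hc i hie i₂ hi₂ j hjf b hb hi hjb
    · exact hc i hie i₁ hi₁ j hjf b hb hii hjb
  have hcolours : c (i₁, b) ≠ c (a, j₁) := by
    rcases eq_or_ne i₁ a with rfl | hia
    · exact hcol ▸ hrow_ne i₂ hi₂ hi.symm b hb
    · exact hrow_ne i₁ hi₁ hia b hb
  obtain ⟨i, hie, i', hie', hii⟩ := Finset.one_lt_card.mp (show 1 < (e.erase a).card by
    rw [Finset.card_erase_of_mem ha]; omega)
  obtain ⟨j, hjf, j', hjf', hjj⟩ := Finset.one_lt_card.mp (show 1 < (f.erase b).card by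
    rw [Finset.card_erase_of_mem hb]; omega)
  rw [Finset.mem_erase] at hie hie' hjf hjf'
  have := hc i hie.2 i' hie'.2 j hjf.2 j' hjf'.2 hii hjj
  have := hrow_ne i hie.2 hie.1 j hjf.2
  have := hrow_ne i' hie'.2 hie'.1 j' hjf'.2
  have := hcol_ne j hjf.2 hjf.1 i hie.2
  have := hcol_ne j' hjf'.2 hjf'.1 i' hie'.2
  omega

lemma exists_eq_insert_insert_singleton {e : Finset α} (he : e.card = 3) {a b : α} (ha : a ∈ e)
    (hb : b ∈ e) (hab : a ≠ b) : ∃ c, c ≠ a ∧ c ≠ b ∧ e = {a, b, c} := by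
  have hb' : b ∈ e.erase a := Finset.mem_erase.mpr ⟨hab.symm, hb⟩
  obtain ⟨c, hc⟩ : ∃ c, (e.erase a).erase b = {c} := by
    rw [← Finset.card_eq_one, Finset.card_erase_of_mem hb', Finset.card_erase_of_mem ha, he]
  have hmem : c ∈ (e.erase a).erase b := hc ▸ Finset.mem_singleton_self c
  simp only [Finset.mem_erase] at hmem
  exact ⟨c, hmem.2.1, hmem.1, by rw [← hc, Finset.insert_erase hb', Finset.insert_erase ha]⟩

lemma colour_ne_of_isHomOn_prodGraph {G : Set (Finset α)} {H : Set (Finset β)}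
    (hG : IsThreeGraph G) (hH : IsThreeGraph H) {c : α × β → Fin 3}
    (hc : IsHomOn (ProdGraph G H) singleEdge c) {e : Finset α} (he : e ∈ G) {f : Finset β}
    (hf : f ∈ H) {i i' : α} (hi : i ∈ e) (hi' : i' ∈ e) {j j' : β} (hj : j ∈ f) (hj' : j' ∈ f)
    (hii : i ≠ i') (hjj : j ≠ j') : c (i, j) ≠ c (i', j') := by
  obtain ⟨i'', hi₁, hi₂, rfl⟩ := exists_eq_insert_insert_singleton (hG e he) hi hi' hii
  obtain ⟨j'', -, -, rfl⟩ := exists_eq_insert_insert_singleton (hH f hf) hj hj' hjj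
  have hedge : {(i, j), (i', j'), (i'', j'')} ∈ ProdGraph G H :=
    ⟨Finset.card_eq_three.mpr ⟨_, _, _, by simp [hii], by simp [hi₁.symm], by simp [hi₂.symm], rfl⟩,
      by simpa [Finset.image_insert] using he, by simpa [Finset.image_insert] using hf⟩
  exact (isHomOn_singleEdge fun e he => he.1).mp hc _ hedge |>.ne
    (by simp) (by simp) (by simp [hii])

theorem isHomOn_section_of_isHomOn_prodGraph {G : Set (Finset α)} {H : Set (Finset β)}
    (hG : IsThreeGraph G) (hH : IsThreeGraph H) {a : α} (ha : ∀ e ∈ G, a ∈ e) {c : α × β → Fin 3}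
    (hc : IsHomOn (ProdGraph G H) singleEdge c) :
    (∃ b, IsHomOn G singleEdge fun i => c (i, b)) ∨ IsHomOn H singleEdge fun j => c (a, j) := by
  rw [isHomOn_singleEdge hH, or_iff_not_imp_right]
  intro hrow
  push Not at hrow
  obtain ⟨f, hf, hrow⟩ := hrow
  obtain ⟨b, hb⟩ : f.Nonempty := Finset.card_pos.mp (by rw [hH f hf]; norm_num)
  refine ⟨b, (isHomOn_singleEdge hG).mpr fun e he => ?_⟩
  refine (injOn_row_or_injOn_column (by rw [hG e he]; norm_num) (by rw [hH f hf]; norm_num)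
    ?_ (ha e he) hb).resolve_left hrow
  exact fun i hi i' hi' j hj j' hj' => colour_ne_of_isHomOn_prodGraph hG hH hc he hf hi hi' hj hj'

lemma isThreeGraph_K4minus : IsThreeGraph K4minus := by
  simp [IsThreeGraph, K4minus]

lemma isThreeGraph_Fstar : IsThreeGraph Fstar := by
  simp [IsThreeGraph, Fstar]

lemma not_isHomOn_K4minus_singleEdge (c : Fin 4 → Fin 3) : ¬ IsHomOn K4minus singleEdge c := by
  rw [isHomOn_singleEdge isThreeGraph_K4minus]
  simp only [K4minus, Set.mem_insert_iff, Set.mem_singleton_iff, Set.InjOn, SetLike.mem_coe,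
    forall_eq_or_imp, Finset.mem_insert, Finset.mem_singleton, forall_eq]
  omega

lemma not_isHomOn_Fstar_singleEdge (c : Fin 7 → Fin 3) : ¬ IsHomOn Fstar singleEdge c := by
  rw [isHomOn_singleEdge isThreeGraph_Fstar]
  simp only [Fstar, Set.mem_insert_iff, Set.mem_singleton_iff, Set.InjOn, SetLike.mem_coe,
    forall_eq_or_imp, Finset.mem_insert, Finset.mem_singleton, forall_eq]
  omega

theorem not_isHomOn_F_singleEdge (c : Fin 4 × Fin 7 → Fin 3) : ¬ IsHomOn F singleEdge c := by
  intro hc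
  have hmem : ∀ e ∈ K4minus, 0 ∈ e := by simp [K4minus]
  rcases isHomOn_section_of_isHomOn_prodGraph isThreeGraph_K4minus isThreeGraph_Fstar hmem hc with
    ⟨b, hb⟩ | hrow
  · exact not_isHomOn_K4minus_singleEdge _ hb
  · exact not_isHomOn_Fstar_singleEdge _ hrow

lemma not_containsCopy_pullbackGraph {γ : Type*} {G : Set (Finset α)} {H : Set (Finset γ)}
    (φ : β → γ) (hH : IsThreeGraph H) (h : ∀ c, ¬ IsHomOn G H c) :
    ¬ ContainsCopy G (pullbackGraph H φ) := by
  rintro ⟨ψ, -, hψ⟩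
  exact h _ (IsHomOn.comp_pullbackGraph hH (.of_image_mem (isThreeGraph_pullbackGraph H φ) hψ))

/-- The residue colouring of `Fin n`; its colour classes have sizes `n / 3` up to rounding. -/
def modThree {n : ℕ} (i : Fin n) : Fin 3 := ⟨i % 3, Nat.mod_lt _ three_pos⟩

lemma pow_three_le_ncard_pullbackGraph_modThree (n : ℕ) :
    (n / 3) ^ 3 ≤ (pullbackGraph singleEdge (modThree (n := n))).ncard := by
  let vertex (r : Fin 3) (a : Fin (n / 3)) : Fin n := ⟨3 * a + r, by omega⟩
  have modThree_vertex (r a) : modThree (vertex r a) = r := by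
    simp only [modThree, vertex, Fin.ext_iff]
    omega
  let edge (a : Fin 3 → Fin (n / 3)) : Finset (Fin n) := Finset.univ.image fun r => vertex r (a r)
  have vertex_mem_edge {a r b} : vertex r b ∈ edge a ↔ b = a r := by
    simp only [edge, vertex, Finset.mem_image, Finset.mem_univ, true_and, Fin.ext_iff]
    refine ⟨?_, fun h => ⟨r, by rw [h]⟩⟩
    rintro ⟨r', h⟩
    obtain rfl : r' = r := by omega
    omega
  have edge_injective : edge.Injective := fun a a' h => by
    ext1 r
    rw [← vertex_mem_edge, ← h, vertex_mem_edge]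
  have range_edge : Set.range edge ⊆ pullbackGraph singleEdge modThree := by
    rintro _ ⟨a, rfl⟩
    constructor
    · exact Finset.card_image_of_injective _ <|
        .of_comp (f := modThree) fun r r' h => by simpa [modThree_vertex] using h
    · exact Finset.eq_univ_of_forall fun r =>
        (@Finset.mem_image ..).mpr ⟨_, vertex_mem_edge.mpr rfl, modThree_vertex r (a r)⟩
  calc (n / 3) ^ 3 = Nat.card (Fin 3 → Fin (n / 3)) := by simp
    _ = (Set.range edge).ncard := (Set.ncard_range_of_injective edge_injective).symm
    _ ≤ _ := Set.ncard_le_ncard range_edge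

end Tripartite

section CoversPairs

open Finset

variable {V : Type*} {H : Set (Finset V)} {S : Set V}

/-- Any two vertices of `S` lie in an edge of `H` contained in `S`, as holds
for the support of a Lagrangian maximiser with minimal support. -/
def CoversPairs (H : Set (Finset V)) (S : Set V) : Prop :=
  S.Pairwise fun i j => ∃ e ∈ H, ↑e ⊆ S ∧ i ∈ e ∧ j ∈ e

lemma card_inter_le_one_of_coversPairs (hH : IsThreeGraph H) (hK : ∀ c, ¬ IsHomOn K4minus H c)
    (hF : ∀ c, ¬ IsHomOn Fstar H c) (hS : CoversPairs H S) :
    {e ∈ H | ↑e ⊆ S}.Pairwise fun e f => (e ∩ f).card ≤ 1 := by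
  rintro e ⟨he, heS⟩ f ⟨hf, hfS⟩ hef
  simp only [card_le_one, mem_inter]
  by_contra! ⟨a, ⟨hae, haf⟩, b, ⟨hbe, hbf⟩, hab⟩
  obtain ⟨c, -, -, rfl⟩ := exists_eq_insert_insert_singleton (hH e he) hae hbe hab
  obtain ⟨d, -, -, rfl⟩ := exists_eq_insert_insert_singleton (hH f hf) haf hbf hab
  have hcd : c ≠ d := by rintro rfl; exact hef rfl
  obtain ⟨ha, hb, hc⟩ : a ∈ S ∧ b ∈ S ∧ c ∈ S := by simpa [Set.insert_subset_iff] using heS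
  have hd : d ∈ S := hfS (by simp)
  obtain ⟨g, hg, hgS, hcg, hdg⟩ := hS hc hd hcd
  obtain ⟨x, -, -, rfl⟩ := exists_eq_insert_insert_singleton (hH g hg) hcg hdg hcd
  have hx : x ∈ S := hgS (by simp)
  rcases eq_or_ne a x with rfl | hax
  · have hacd : {a, c, d} ∈ H := by rwa [pair_comm d a, insert_comm c a] at hg
    exact hK _ (isHomOn_K4minus hH he hf hacd)
  rcases eq_or_ne b x with rfl | hbx
  · have hbcd : {b, c, d} ∈ H := by rwa [pair_comm d b, insert_comm c b] at hg
    rw [insert_comm a b] at he hf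
    exact hK _ (isHomOn_K4minus hH he hf hbcd)
  obtain ⟨g₁, hg₁, -, hag, hxg⟩ := hS ha hx hax
  obtain ⟨u, -, -, rfl⟩ := exists_eq_insert_insert_singleton (hH g₁ hg₁) hag hxg hax
  obtain ⟨g₂, hg₂, -, hbg, hxg⟩ := hS hb hx hbx
  obtain ⟨v, -, -, rfl⟩ := exists_eq_insert_insert_singleton (hH g₂ hg₂) hbg hxg hbx
  exact hF _ (isHomOn_Fstar hH he hf hg hg₁ hg₂)

end CoversPairs

section Lagrangian

open Finset

variable {V : Type*} [Fintype V] {H : Set (Finset V)} {x : V → ℝ} {r : ℕ}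

/-- The Lagrangian polynomial of the hypergraph `H`, evaluated at the vertex weights `x`. -/
noncomputable def lagrangian (H : Set (Finset V)) (x : V → ℝ) : ℝ :=
  ∑ e with e ∈ H, ∏ i ∈ e, x i

/-- The partial derivative of `lagrangian H` with respect to the weight of `i`. -/
noncomputable def lagrangianPartial (H : Set (Finset V)) (i : V) (x : V → ℝ) : ℝ :=
  ∑ e with e ∈ H ∧ i ∈ e, ∏ j ∈ e.erase i, x j

lemma continuous_lagrangian : Continuous (lagrangian H) := by
  unfold lagrangian
  fun_prop

lemma lagrangian_smul (hH : H.Sized r) (c : ℝ) : lagrangian H (c • x) = c ^ r * lagrangian H x := by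
  simp only [lagrangian, Pi.smul_apply, smul_eq_mul, prod_mul_distrib, prod_const, mul_sum]
  exact sum_congr rfl fun e he => by rw [hH (mem_filter.mp he).2]

lemma lagrangian_add_single (i : V) (t : ℝ) :
    lagrangian H (x + Pi.single i t) = lagrangian H x + t * lagrangianPartial H i x := by
  have hprod (e : Finset V) : ∏ j ∈ e, (x + Pi.single i t : V → ℝ) j =
      ∏ j ∈ e, x j + if i ∈ e then t * ∏ j ∈ e.erase i, x j else 0 := by
    have hcongr {f : Finset V} (hf : i ∉ f) :
        ∏ j ∈ f, (x + Pi.single i t : V → ℝ) j = ∏ j ∈ f, x j :=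
      prod_congr rfl fun j hj => by
        rw [Pi.add_apply, Pi.single_eq_of_ne (ne_of_mem_of_not_mem hj hf), add_zero]
    split_ifs with hi
    · rw [← mul_prod_erase _ _ hi, ← mul_prod_erase _ _ hi, hcongr (notMem_erase i e), Pi.add_apply,
        Pi.single_eq_same, add_mul]
    · rw [hcongr hi, add_zero]
  simp only [lagrangian, lagrangianPartial, hprod, sum_add_distrib, ← sum_filter, filter_filter,
    mul_sum]

lemma lagrangianPartial_congr {y : V → ℝ} {i : V}
    (h : ∀ e ∈ H, i ∈ e → ∏ j ∈ e.erase i, x j = ∏ j ∈ e.erase i, y j) :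
    lagrangianPartial H i x = lagrangianPartial H i y :=
  sum_congr rfl fun e he => h e (mem_filter.mp he).2.1 (mem_filter.mp he).2.2

lemma lagrangian_le_mul_sum_pow (hH : H.Sized r) (hmax : IsMaxOn (lagrangian H) (stdSimplex ℝ V) x)
    {y : V → ℝ} (hy : 0 ≤ y) (hsum : 0 < ∑ i, y i) :
    lagrangian H y ≤ lagrangian H x * (∑ i, y i) ^ r := by
  set s := ∑ i, y i
  have hmem : s⁻¹ • y ∈ stdSimplex ℝ V :=
    ⟨fun i => mul_nonneg (by positivity) (hy i), by
      simp only [Pi.smul_apply, smul_eq_mul, ← mul_sum]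
      exact inv_mul_cancel₀ hsum.ne'⟩
  have hle := isMaxOn_iff.mp hmax _ hmem
  rwa [lagrangian_smul hH, inv_pow, inv_mul_le_iff₀ (by positivity), mul_comm] at hle

lemma lagrangianPartial_eq_of_isMaxOn (hH : H.Sized r) (hx : x ∈ stdSimplex ℝ V)
    (hmax : IsMaxOn (lagrangian H) (stdSimplex ℝ V) x) {i : V} (hi : 0 < x i) :
    lagrangianPartial H i x = r * lagrangian H x := by
  set L := lagrangian H x
  set D := lagrangianPartial H i x
  let gap (s : ℝ) : ℝ := L * (1 + s) ^ r - (L + s * D)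
  have hgap : ∀ s > max (-x i) (-1), 0 ≤ gap s := fun s hs => by
    rw [gt_iff_lt, max_lt_iff] at hs
    have hsum : ∑ j, (x + Pi.single i s : V → ℝ) j = 1 + s := by
      simp only [Pi.add_apply, sum_add_distrib, hx.2, sum_pi_single', mem_univ, if_true]
    have hnonneg : 0 ≤ x + Pi.single i s := fun j => by
      rcases eq_or_ne j i with rfl | hj
      · simpa using (by linarith : 0 ≤ x j + s)
      · simpa [hj] using hx.1 j
    have := lagrangian_le_mul_sum_pow hH hmax hnonneg (by rw [hsum]; linarith)
    rw [hsum, lagrangian_add_single] at this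
    exact sub_nonneg.mpr this
  have hmin : IsLocalMin gap 0 := by
    filter_upwards [lt_mem_nhds (max_lt (neg_lt_zero.mpr hi) neg_one_lt_zero)] with s hs
    simpa [gap] using hgap s hs
  have hderiv : HasDerivAt gap (L * (r * (1 + 0) ^ (r - 1) * 1) - (0 + 1 * D)) 0 :=
    ((((hasDerivAt_id' 0).const_add 1).pow r).const_mul L).sub
      (((hasDerivAt_id' 0).mul_const D).const_add L |>.congr_deriv (zero_add _).symm)
  have := hmin.hasDerivAt_eq_zero hderiv
  simp only [add_zero, one_pow] at this
  linarith

lemma lagrangian_shift {i j : V}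
    (hij : ∀ e ∈ H, i ∈ e → j ∈ e → ∃ k ∈ e, k ≠ i ∧ k ≠ j ∧ x k = 0) (t : ℝ) :
    lagrangian H (x + Pi.single i t + Pi.single j (-t)) =
      lagrangian H x + t * (lagrangianPartial H i x - lagrangianPartial H j x) := by
  have hpartial : lagrangianPartial H j (x + Pi.single i t) = lagrangianPartial H j x := by
    refine lagrangianPartial_congr fun e he hj => ?_
    by_cases hi : i ∈ e
    · obtain ⟨k, hke, hki, hkj, hk⟩ := hij e he hi hj
      have hke' := mem_erase.mpr ⟨hkj, hke⟩
      rw [prod_eq_zero hke' hk, prod_eq_zero hke' (by simp [hki, hk])]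
    · refine prod_congr rfl fun k hk => ?_
      have hki : k ≠ i := ne_of_mem_of_not_mem (mem_of_mem_erase hk) hi
      simp [hki]
  rw [lagrangian_add_single, lagrangian_add_single, hpartial]
  ring

lemma exists_support_ssubset_of_not_covered (hx : x ∈ stdSimplex ℝ V) {i j : V} (hne : i ≠ j)
    (hj : x j ≠ 0) (hij : ∀ e ∈ H, i ∈ e → j ∈ e → ∃ k ∈ e, k ≠ i ∧ k ≠ j ∧ x k = 0)
    (hi : x i ≠ 0) (hle : lagrangianPartial H j x ≤ lagrangianPartial H i x) :
    ∃ y ∈ stdSimplex ℝ V, lagrangian H x ≤ lagrangian H y ∧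
      Function.support y ⊂ Function.support x := by
  set y : V → ℝ := x + Pi.single i (x j) + Pi.single j (-x j)
  have hyi : y i = x i + x j := by simp [y, hne]
  have hyj : y j = 0 := by simp [y, hne.symm]
  have hyk {k : V} (hki : k ≠ i) (hkj : k ≠ j) : y k = x k := by simp [y, hki, hkj]
  refine ⟨y, ⟨fun k => ?_, ?_⟩, ?_, ?_⟩
  · rcases eq_or_ne k i with rfl | hki
    · exact hyi ▸ add_nonneg (hx.1 k) (hx.1 j)
    · rcases eq_or_ne k j with rfl | hkj
      · exact hyj.ge
      · exact hyk hki hkj ▸ hx.1 k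
  · simp [y, sum_add_distrib, hx.2]
  · rw [lagrangian_shift hij]
    exact le_add_of_nonneg_right (mul_nonneg (hx.1 j) (sub_nonneg.mpr hle))
  · refine (Set.ssubset_iff_of_subset fun k hk => ?_).mpr ⟨j, hj, by simp [hyj]⟩
    rcases eq_or_ne k i with rfl | hki
    · exact hi
    · have hkj : k ≠ j := fun h => hk (h ▸ hyj)
      exact fun h => hk (hyk hki hkj ▸ h)

/-- If two vertices are not covered, shifting weight from one to the other changes the Lagrangian
linearly, so one of the two directions preserves maximality and shrinks the support. -/
theorem exists_isMaxOn_coversPairs [Nonempty V] (H : Set (Finset V)) :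
    ∃ x ∈ stdSimplex ℝ V, IsMaxOn (lagrangian H) (stdSimplex ℝ V) x ∧
      CoversPairs H (Function.support x) := by
  obtain ⟨x, ⟨hx, hmax⟩, hminimal⟩ := exists_minimalFor_of_wellFoundedLT
    (fun x => x ∈ stdSimplex ℝ V ∧ IsMaxOn (lagrangian H) (stdSimplex ℝ V) x) Function.support
    ((isCompact_stdSimplex ℝ V).exists_isMaxOn
      ⟨_, single_mem_stdSimplex ℝ (Classical.arbitrary V)⟩ continuous_lagrangian.continuousOn)
  refine ⟨x, hx, hmax, fun i hi j hj hne => ?_⟩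
  by_contra! hcov
  have huncovered : ∀ e ∈ H, i ∈ e → j ∈ e → ∃ k ∈ e, k ≠ i ∧ k ≠ j ∧ x k = 0 := by
    intro e he hie hje
    obtain ⟨k, hke, hk⟩ := Set.not_subset.mp fun hsub => hcov e he hsub hie hje
    have hk : x k = 0 := by simpa using hk
    exact ⟨k, hke, fun h => hi (h ▸ hk), fun h => hj (h ▸ hk), hk⟩
  obtain ⟨y, hy, hxy, hsupp⟩ : ∃ y ∈ stdSimplex ℝ V, lagrangian H x ≤ lagrangian H y ∧
      Function.support y ⊂ Function.support x := by
    rcases le_total (lagrangianPartial H j x) (lagrangianPartial H i x) with hle | hle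
    · exact exists_support_ssubset_of_not_covered hx hne hj huncovered hi hle
    · refine exists_support_ssubset_of_not_covered hx hne.symm hi (fun e he hje hie => ?_) hj hle
      obtain ⟨k, hke, hki, hkj, hk⟩ := huncovered e he hie hje
      exact ⟨k, hke, hkj, hki, hk⟩
  have hymax : IsMaxOn (lagrangian H) (stdSimplex ℝ V) y := fun z hz => (hmax hz).trans hxy
  exact hsupp.not_subset (hminimal ⟨hy, hymax⟩ hsupp.subset)

/-- The edges of `H` containing `i` all of whose vertices have nonzero weight: the edges
that contribute to `lagrangianPartial H i x`. -/
noncomputable def supportedStar (H : Set (Finset V)) (x : V → ℝ) (i : V) : Finset (Finset V) :=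
  {e | e ∈ H ∧ ↑e ⊆ Function.support x ∧ i ∈ e}

lemma lagrangianPartial_eq_sum_supportedStar {i : V} (hi : x i ≠ 0) :
    lagrangianPartial H i x = ∑ e ∈ supportedStar H x i, ∏ j ∈ e.erase i, x j := by
  refine (sum_subset (fun e he => ?_) fun e he he' => ?_).symm
  · simp only [supportedStar, mem_filter_univ] at he ⊢
    exact ⟨he.1, he.2.2⟩
  · simp only [supportedStar, mem_filter_univ] at he he'
    obtain ⟨j, hje, hj⟩ := Set.not_subset.mp fun hsub => he' ⟨he.1, hsub, he.2⟩
    have hj : x j = 0 := by simpa using hj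
    exact prod_eq_zero (mem_erase.mpr ⟨fun h => hi (h ▸ hj), hje⟩) hj

lemma sum_supportedStar_le (hx : x ∈ stdSimplex ℝ V)
    (hlin : {e ∈ H | ↑e ⊆ Function.support x}.Pairwise fun e f => (e ∩ f).card ≤ 1) (i : V) :
    ∑ e ∈ supportedStar H x i, ∑ j ∈ e.erase i, x j ≤ 1 - x i := by
  have hdisj : (supportedStar H x i : Set (Finset V)).PairwiseDisjoint (·.erase i) := by
    intro e he f hf hef
    simp only [supportedStar, coe_filter, mem_univ, true_and, Set.mem_ofPred_eq] at he hf
    rw [Function.onFun, disjoint_left]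
    intro j hje hjf
    rw [mem_erase] at hje hjf
    exact hje.1 <| card_le_one.mp (hlin ⟨he.1, he.2.1⟩ ⟨hf.1, hf.2.1⟩ hef) _
      (mem_inter.mpr ⟨hje.2, hjf.2⟩) _ (mem_inter.mpr ⟨he.2.2, hf.2.2⟩)
  calc ∑ e ∈ supportedStar H x i, ∑ j ∈ e.erase i, x j
      = ∑ j ∈ (supportedStar H x i).biUnion (·.erase i), x j := (sum_biUnion hdisj).symm
    _ ≤ ∑ j ∈ univ.erase i, x j :=
        sum_le_sum_of_subset_of_nonneg
          (biUnion_subset.mpr fun e _ => erase_subset_erase i (subset_univ e)) fun j _ _ => hx.1 j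
    _ = 1 - x i := by rw [← hx.2, ← sum_erase_eq_sub (mem_univ i)]

lemma prod_erase_le (hx : x ∈ stdSimplex ℝ V) {i : V} (hi : ∀ j, x j ≤ x i) {e : Finset V}
    (he : e.card = 3) (hie : i ∈ e) :
    ∏ j ∈ e.erase i, x j ≤ min (x i / 2) ((1 - x i) / 4) * ∑ j ∈ e.erase i, x j := by
  obtain ⟨p, q, hpq, hpqe⟩ := card_eq_two.mp (by rw [card_erase_of_mem hie, he] : #(e.erase i) = 2)
  have hsum : x p + x q ≤ 1 - x i := by
    rw [← hx.2, ← sum_erase_eq_sub (mem_univ i), ← sum_pair hpq, ← hpqe]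
    exact sum_le_sum_of_subset_of_nonneg (erase_subset_erase i (subset_univ e)) fun j _ _ => hx.1 j
  have hp := hx.1 p
  have hq := hx.1 q
  rw [hpqe, prod_pair hpq, sum_pair hpq]
  rcases min_choice (x i / 2) ((1 - x i) / 4) with h | h <;> rw [h]
  · nlinarith [hi p, hi q]
  · nlinarith [sq_nonneg (x p - x q)]

lemma lagrangianPartial_le_one_ninth (hH : IsThreeGraph H)
    (hlin : {e ∈ H | ↑e ⊆ Function.support x}.Pairwise fun e f => (e ∩ f).card ≤ 1)
    (hx : x ∈ stdSimplex ℝ V) {i : V} (hi : ∀ j, x j ≤ x i) (hi0 : 0 < x i) :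
    lagrangianPartial H i x ≤ 1 / 9 := by
  set K := min (x i / 2) ((1 - x i) / 4)
  have hi1 : x i ≤ 1 := hx.2 ▸ single_le_sum (fun j _ => hx.1 j) (mem_univ i)
  calc lagrangianPartial H i x
      = ∑ e ∈ supportedStar H x i, ∏ j ∈ e.erase i, x j :=
        lagrangianPartial_eq_sum_supportedStar hi0.ne'
    _ ≤ ∑ e ∈ supportedStar H x i, K * ∑ j ∈ e.erase i, x j :=
        sum_le_sum fun e he => by
          simp only [supportedStar, mem_filter_univ] at he
          exact prod_erase_le hx hi (hH e he.1) he.2.2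
    _ ≤ K * (1 - x i) := by
        rw [← mul_sum]
        exact mul_le_mul_of_nonneg_left (sum_supportedStar_le hx hlin i)
          (le_min (by linarith) (by linarith))
    _ ≤ 1 / 9 := by
        rcases le_total (x i) (1 / 3) with h | h
        · nlinarith [min_le_left (x i / 2) ((1 - x i) / 4)]
        · nlinarith [min_le_right (x i / 2) ((1 - x i) / 4)]

theorem lagrangian_le_one_div_twentySeven (hH : IsThreeGraph H)
    (hK : ∀ c, ¬ IsHomOn K4minus H c) (hF : ∀ c, ¬ IsHomOn Fstar H c) (hx : x ∈ stdSimplex ℝ V) :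
    lagrangian H x ≤ 1 / 27 := by
  have : Nonempty V := by
    by_contra! h
    simpa using hx.2
  obtain ⟨z, hz, hmax, hcov⟩ := exists_isMaxOn_coversPairs H
  have hlin := card_inter_le_one_of_coversPairs hH hK hF hcov
  obtain ⟨i, hi⟩ := Finite.exists_max z
  have hi0 : 0 < z i := by
    by_contra! h
    have := sum_nonpos fun j (_ : j ∈ univ) => (hi j).trans h
    linarith [hz.2]
  calc lagrangian H x ≤ lagrangian H z := hmax hx
    _ = lagrangianPartial H i z / 3 := by
        have := lagrangianPartial_eq_of_isMaxOn (fun e he => hH e he) hz hmax hi0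
        push_cast at this
        linarith
    _ ≤ 1 / 27 := by linarith [lagrangianPartial_le_one_ninth hH hlin hz hi hi0]

lemma lagrangian_inv_card (hH : IsThreeGraph H) :
    lagrangian H (fun _ => (Fintype.card V : ℝ)⁻¹) = H.ncard / (Fintype.card V : ℝ) ^ 3 := by
  have hcard : ∀ e ∈ ({e | e ∈ H} : Finset (Finset V)),
      ∏ _i ∈ e, (Fintype.card V : ℝ)⁻¹ = ((Fintype.card V : ℝ) ^ 3)⁻¹ := fun e he => by
    rw [prod_const, hH e (mem_filter.mp he).2, inv_pow]
  rw [lagrangian, sum_congr rfl hcard, sum_const, nsmul_eq_mul, ← div_eq_mul_inv,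
    ← Set.ncard_coe_finset, coe_filter_univ, Set.ofPred_mem_eq]

end Lagrangian

section TripleDensity

open Finset
open scoped BigOperators Nat

variable {κ V : Type*} [Fintype κ] [DecidableEq κ] [Fintype V] {H : Set (Finset V)}

lemma card_filter_image_eq {e : Finset V} (he : #e = Fintype.card κ) :
    #{z : κ → V | univ.image z = e} = (Fintype.card κ)! := by
  have hinj : Function.Injective fun (σ : κ ≃ e) i => (σ i : V) := fun σ τ h =>
    Equiv.ext fun i => Subtype.ext (congrFun h i)
  have himage : ({z | univ.image z = e} : Finset (κ → V)) =
      univ.image fun (σ : κ ≃ e) i => (σ i : V) := by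
    ext z
    simp only [mem_filter_univ, mem_image, mem_univ, true_and]
    constructor
    · rintro rfl
      have hsurj : Function.Surjective
          fun i => (⟨z i, mem_image_of_mem z (mem_univ i)⟩ : univ.image z) := by
        rintro ⟨_, hv⟩
        obtain ⟨i, -, rfl⟩ := mem_image.mp hv
        exact ⟨i, rfl⟩
      exact ⟨.ofBijective _ ((Fintype.bijective_iff_surjective_and_card _).mpr
        ⟨hsurj, by rw [Fintype.card_coe, he]⟩), rfl⟩
    · rintro ⟨σ, rfl⟩
      ext v
      simp only [mem_image, mem_univ, true_and]
      exact ⟨fun ⟨i, hi⟩ => hi ▸ (σ i).2, fun hv => ⟨σ.symm ⟨v, hv⟩, by simp⟩⟩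
  rw [himage, card_image_of_injective _ hinj, card_univ,
    Fintype.card_equiv (Fintype.equivOfCardEq (by rw [Fintype.card_coe, he]))]

lemma card_filter_image_mem (hH : H.Sized (Fintype.card κ)) :
    #{z : κ → V | univ.image z ∈ H} = (Fintype.card κ)! * H.ncard := by
  have hfibre : ∀ e ∈ ({e | e ∈ H} : Finset (Finset V)),
      #{z ∈ ({z | univ.image z ∈ H} : Finset (κ → V)) | univ.image z = e} = (Fintype.card κ)! := by
    intro e he
    rw [mem_filter_univ] at he
    rw [filter_filter, filter_congr fun z _ => and_iff_right_of_imp fun h => h ▸ he]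
    exact card_filter_image_eq (hH he)
  rw [card_eq_sum_card_fiberwise (f := fun z => univ.image z) (t := {e | e ∈ H})
    fun z hz => by simpa using hz]
  rw [sum_congr rfl hfibre, sum_const, smul_eq_mul, mul_comm, ← Set.ncard_coe_finset,
    coe_filter_univ, Set.ofPred_mem_eq]

/-- The probability that three independent uniformly random vertices form an edge of `H`.
Sampling is with replacement, so this is the edge density up to `O(1 / card V)`. -/
noncomputable def tripleDensity (H : Set (Finset V)) : ℝ :=
  𝔼 z : Fin 3 → V, if univ.image z ∈ H then 1 else 0

lemma tripleDensity_eq (hH : IsThreeGraph H) :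
    tripleDensity H = 6 * H.ncard / (Fintype.card V : ℝ) ^ 3 := by
  have hsized : H.Sized (Fintype.card (Fin 3)) := fun e he => hH e he
  rw [tripleDensity, Fintype.expect_eq_sum_div_card, sum_boole, card_filter_image_mem hsized]
  simp [Nat.factorial]

lemma tripleDensity_le_one [Nonempty V] : tripleDensity H ≤ 1 :=
  expect_le univ_nonempty fun _ _ => ite_le_one le_rfl zero_le_one

theorem tripleDensity_le_two_ninths (hH : IsThreeGraph H)
    (hK : ∀ c, ¬ IsHomOn K4minus H c) (hF : ∀ c, ¬ IsHomOn Fstar H c) :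
    tripleDensity H ≤ 2 / 9 := by
  rw [tripleDensity_eq hH, mul_div_assoc]
  rcases isEmpty_or_nonempty V with hV | hV
  · norm_num
  have hmem : (fun _ => (Fintype.card V : ℝ)⁻¹) ∈ stdSimplex ℝ V :=
    ⟨fun _ => by positivity, by simp⟩
  have := lagrangian_le_one_div_twentySeven hH hK hF hmem
  rw [lagrangian_inv_card hH] at this
  linarith

theorem tripleDensity_le_two_ninths_of_not_isHomOn_F (hH : IsThreeGraph H)
    (h : ∀ c, ¬ IsHomOn F H c) : tripleDensity H ≤ 2 / 9 :=
  tripleDensity_le_two_ninths hH (fun _ hc => h _ (hc.comp_fst Fstar))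
    fun _ hc => h _ (hc.comp_snd K4minus)

end TripleDensity

section Supersaturation

open Finset Filter
open scoped BigOperators

variable {α ι V : Type*} [Fintype α] [Fintype ι] [Fintype V] [Nonempty V]
  [DecidableEq ι] {G : Set (Finset α)} {H : Set (Finset V)}

/-- The vertices at any three distinct positions of the random sample `x` form a uniformly random
triple. -/
lemma mul_tripleDensity_le_expect_pullbackGraph (hH : IsThreeGraph H) [Nonempty ι] :
    (1 - 9 / Fintype.card ι) * tripleDensity H ≤
      𝔼 x : ι → V, tripleDensity (pullbackGraph H x) := by
  calc (1 - 9 / Fintype.card ι) * tripleDensity H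
      ≤ (𝔼 g : Fin 3 → ι, if g.Injective then 1 else 0) * tripleDensity H := by
        have hnonneg : 0 ≤ tripleDensity H := expect_nonneg fun z _ => by split_ifs <;> norm_num
        refine mul_le_mul_of_nonneg_right (le_trans ?_ one_sub_sq_div_le_expect_injective) hnonneg
        norm_num
    _ = 𝔼 g : Fin 3 → ι, (if g.Injective then 1 else 0) * tripleDensity H := expect_mul ..
    _ ≤ 𝔼 g : Fin 3 → ι, 𝔼 x : ι → V, if univ.image (x ∘ g) ∈ H then 1 else 0 := by
        refine expect_le_expect fun g _ => ?_
        split_ifs with hg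
        · rw [one_mul, tripleDensity, ← expect_comp_of_injective hg]
        · rw [zero_mul]
          exact expect_nonneg fun x _ => by split_ifs <;> norm_num
    _ = 𝔼 x : ι → V, tripleDensity (pullbackGraph H x) := by
        have hcard : #(univ : Finset (Fin 3)) = 3 := rfl
        simp only [tripleDensity, image_mem_pullbackGraph_iff hH hcard]
        exact expect_comm ..

lemma exists_le_expect_isHomOn_comp {ϖ : ℝ} (hϖ : 0 ≤ ϖ) [Nonempty ι]
    (hG : ∀ K : Set (Finset ι), IsThreeGraph K → (∀ c, ¬ IsHomOn G K c) → tripleDensity K ≤ ϖ)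
    (hH : IsThreeGraph H) :
    ∃ c : α → ι, ((1 - 9 / Fintype.card ι) * tripleDensity H - ϖ) / Fintype.card (α → ι) ≤
      𝔼 x : ι → V, if IsHomOn G H (x ∘ c) then 1 else 0 := by
  have hsample (x : ι → V) : tripleDensity (pullbackGraph H x) ≤
      ϖ + ∑ c : α → ι, if IsHomOn G H (x ∘ c) then 1 else 0 := by
    by_cases h : ∃ c, IsHomOn G (pullbackGraph H x) c
    · obtain ⟨c, hc⟩ := h
      have : (1 : ℝ) ≤ ∑ c : α → ι, if IsHomOn G H (x ∘ c) then 1 else 0 := by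
        rw [sum_boole, Nat.one_le_cast, Nat.one_le_iff_ne_zero, card_ne_zero]
        exact ⟨c, mem_filter.mpr ⟨mem_univ c, hc.comp_pullbackGraph hH⟩⟩
      linarith [tripleDensity_le_one (H := pullbackGraph H x)]
    · have : (0 : ℝ) ≤ ∑ c : α → ι, if IsHomOn G H (x ∘ c) then 1 else 0 := by positivity
      linarith [hG _ (isThreeGraph_pullbackGraph H x) (not_exists.mp h)]
  suffices h : (1 - 9 / Fintype.card ι) * tripleDensity H - ϖ ≤
      ∑ c : α → ι, 𝔼 x : ι → V, if IsHomOn G H (x ∘ c) then 1 else 0 by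
    rw [← Finset.card_smul_expect, nsmul_eq_mul, ← div_le_iff₀' (by positivity)] at h
    obtain ⟨c, -, hc⟩ := exists_le_of_le_expect univ_nonempty h
    exact ⟨c, hc⟩
  rw [← expect_sum_comm, sub_le_iff_le_add']
  calc (1 - 9 / Fintype.card ι) * tripleDensity H
      ≤ 𝔼 x : ι → V, tripleDensity (pullbackGraph H x) :=
        mul_tripleDensity_le_expect_pullbackGraph hH
    _ ≤ 𝔼 x : ι → V, (ϖ + ∑ c : α → ι, if IsHomOn G H (x ∘ c) then 1 else 0) :=
        expect_le_expect fun x _ => hsample x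
    _ = _ := by rw [expect_add_distrib, Fintype.expect_const]

lemma containsCopy_of_le_expect_isHomOn_comp (hG : IsThreeGraph G) {k : ℕ} (c : α → Fin k) {δ : ℝ}
    (hδ : 0 ≤ δ) (hle : δ ≤ 𝔼 x : Fin k → V, if IsHomOn G H (x ∘ c) then 1 else 0)
    (hcard : (Fintype.card (Fin k × α) : ℝ) ^ 2 / Fintype.card V < δ ^ Fintype.card α ^ k) :
    ContainsCopy G H := by
  let indicator (z : Fin k × α → V) : ℝ :=
    ∏ s : Fin k → α, if IsHomOn G H ((fun i => z (i, s i)) ∘ c) then 1 else 0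
  have hbox : δ ^ Fintype.card α ^ k ≤ 𝔼 z, indicator z :=
    calc δ ^ Fintype.card α ^ k
        ≤ (𝔼 x : Fin k → V, if IsHomOn G H (x ∘ c) then 1 else 0) ^ Fintype.card α ^ k := by gcongr
      _ ≤ 𝔼 y : Fin k → α → V, ∏ s : Fin k → α,
            if IsHomOn G H ((fun i => y i (s i)) ∘ c) then 1 else 0 :=
          expect_pow_le_expect_prod_sections k _ fun x => by positivity
      _ = 𝔼 z, indicator z :=
          Fintype.expect_equiv (Equiv.curry _ _ _).symm _ _ fun _ => rfl
  obtain ⟨z, hz, hpos⟩ := exists_injective_of_sq_div_lt_expect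
    (fun z => prod_le_one (fun s _ => by positivity) fun s _ => ite_le_one le_rfl zero_le_one)
    (hcard.trans_le hbox)
  have hsections (s : Fin k → α) : IsHomOn G H ((fun i => z (i, s i)) ∘ c) := by
    by_contra hs
    exact hpos.ne' (prod_eq_zero (mem_univ s) (if_neg hs))
  refine ⟨fun u => z (c u, u), fun u v huv => (Prod.ext_iff.mp (hz huv)).2, fun e he => ?_⟩
  exact (isHomOn_of_forall_sections (y := Function.curry z) hG hsections e he).2

/-- Supersaturation: a positive proportion of the samples of a fixed large size `k` has density
above `ϖ`, hence admits a homomorphism from `G`, and the same map `α → Fin k` serves a positive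
proportion of them. Replacing every sampled vertex by copies indexed by `α` makes this map
injective. -/
theorem eventually_forall_containsCopy {α : Type*} [Finite α] {G : Set (Finset α)}
    (hG : IsThreeGraph G) {ϖ ε : ℝ} (hϖ : 0 ≤ ϖ) (hε : 0 < ε)
    (h : ∀ (k : ℕ) (K : Set (Finset (Fin k))), IsThreeGraph K → (∀ c, ¬ IsHomOn G K c) →
      tripleDensity K ≤ ϖ) :
    ∀ᶠ n : ℕ in atTop, ∀ H : Set (Finset (Fin n)), IsThreeGraph H → ϖ + ε ≤ tripleDensity H →
      ContainsCopy G H := by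
  have := Fintype.ofFinite α
  obtain ⟨k, hk0, hk⟩ : ∃ k : ℕ, 0 < k ∧ (9 / k : ℝ) < ε / 2 :=
    ((eventually_gt_atTop 0).and
      ((tendsto_const_div_atTop_nhds_zero_nat 9).eventually_lt_const (half_pos hε))).exists
  have : Nonempty (Fin k) := Fin.pos_iff_nonempty.mp hk0
  set δ : ℝ := ε / 2 / Fintype.card (α → Fin k)
  have hδ : 0 < δ := by positivity
  filter_upwards [eventually_gt_atTop 0, (tendsto_const_div_atTop_nhds_zero_nat
    ((Fintype.card (Fin k × α) : ℝ) ^ 2)).eventually_lt_const (pow_pos hδ (Fintype.card α ^ k))]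
    with n hn hcard H hH hdensity
  have : Nonempty (Fin n) := Fin.pos_iff_nonempty.mp hn
  obtain ⟨c, hc⟩ := exists_le_expect_isHomOn_comp hϖ (h k) hH
  refine containsCopy_of_le_expect_isHomOn_comp hG c hδ.le (le_trans ?_ hc) (by simpa using hcard)
  have : 9 / k * tripleDensity H ≤ 9 / k :=
    mul_le_of_le_one_right (by positivity) tripleDensity_le_one
  refine div_le_div_of_nonneg_right ?_ (Nat.cast_nonneg _)
  rw [Fintype.card_fin]
  linarith

end Supersaturation

section TuranDensity

open Filter Topology
open scoped Asymptotics Nat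

variable {n : ℕ}

lemma bddAbove_ncard_F_free : BddAbove
    {k | ∃ H : Set (Finset (Fin n)), IsThreeGraph H ∧ ¬ ContainsCopy F H ∧ H.ncard = k} := by
  refine ⟨Nat.card (Finset (Fin n)), ?_⟩
  rintro _ ⟨H, -, -, rfl⟩
  exact Set.ncard_le_card H

lemma ncard_le_exF {H : Set (Finset (Fin n))} (hH : IsThreeGraph H) (hF : ¬ ContainsCopy F H) :
    H.ncard ≤ exF n :=
  le_csSup bddAbove_ncard_F_free ⟨H, hH, hF, rfl⟩

lemma not_containsCopy_F_pullbackGraph_modThree :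
    ¬ ContainsCopy F (pullbackGraph singleEdge (modThree (n := n))) :=
  not_containsCopy_pullbackGraph _ isThreeGraph_singleEdge not_isHomOn_F_singleEdge

lemma pow_three_le_exF (n : ℕ) : (n / 3) ^ 3 ≤ exF n :=
  (pow_three_le_ncard_pullbackGraph_modThree n).trans <|
    ncard_le_exF (isThreeGraph_pullbackGraph _ _) not_containsCopy_F_pullbackGraph_modThree

lemma exists_ncard_eq_exF (n : ℕ) : ∃ H : Set (Finset (Fin n)),
    IsThreeGraph H ∧ ¬ ContainsCopy F H ∧ H.ncard = exF n := by
  have hne : {k | ∃ H : Set (Finset (Fin n)),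
      IsThreeGraph H ∧ ¬ ContainsCopy F H ∧ H.ncard = k}.Nonempty :=
    ⟨_, _, isThreeGraph_pullbackGraph _ _, not_containsCopy_F_pullbackGraph_modThree, rfl⟩
  exact Nat.sSup_mem hne bddAbove_ncard_F_free

lemma isThreeGraph_prodGraph {α β : Type*} (G : Set (Finset α)) (H : Set (Finset β)) :
    IsThreeGraph (ProdGraph G H) := fun _ he => he.1

theorem tendsto_six_mul_exF_div_pow_three :
    Tendsto (fun n : ℕ => 6 * (exF n : ℝ) / n ^ 3) atTop (𝓝 (2 / 9)) := by
  refine tendsto_order.mpr ⟨fun a ha => ?_, fun a ha => ?_⟩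
  · have hfloor : Tendsto (fun n : ℕ => ((n / 3 : ℕ) : ℝ) / n) atTop (𝓝 (1 / 3)) := by
      have := (tendsto_nat_floor_mul_div_atTop (R := ℝ) (a := 1 / 3) (by norm_num)).comp
        tendsto_natCast_atTop_atTop
      refine this.congr fun n => ?_
      rw [Function.comp_apply, one_div_mul_eq_div, ← Nat.floor_div_eq_div (K := ℝ), Nat.cast_ofNat]
    have hlower : Tendsto (fun n : ℕ => 6 * (((n / 3 : ℕ) : ℝ) / n) ^ 3) atTop (𝓝 (2 / 9)) := by
      convert (hfloor.pow 3).const_mul 6 using 2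
      norm_num
    filter_upwards [hlower.eventually_const_lt ha] with n hn
    refine hn.trans_le ?_
    rw [div_pow, ← mul_div_assoc]
    gcongr
    exact_mod_cast pow_three_le_exF n
  · filter_upwards [eventually_forall_containsCopy (isThreeGraph_prodGraph K4minus Fstar)
      (by norm_num) (sub_pos.mpr ha) fun k K hK => tripleDensity_le_two_ninths_of_not_isHomOn_F hK]
      with n hn
    obtain ⟨H, hH, hfree, hcard⟩ := exists_ncard_eq_exF n
    by_contra! hle
    refine hfree (hn H hH ?_)
    rw [tripleDensity_eq hH, hcard, Fintype.card_fin]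
    linarith

theorem tendsto_exF_div_choose :
    Tendsto (fun n : ℕ => (exF n : ℝ) / n.choose 3) atTop (𝓝 (2 / 9)) := by
  have hequiv : (fun n : ℕ => (exF n : ℝ) / n.choose 3) ~[atTop]
      fun n => (exF n : ℝ) / (n ^ 3 / (3 ! : ℕ)) :=
    Asymptotics.IsEquivalent.refl.div (isEquivalent_choose 3)
  refine hequiv.symm.tendsto_nhds (tendsto_six_mul_exF_div_pow_three.congr fun n => ?_)
  rw [div_div_eq_mul_div, mul_comm 6]
  norm_num [Nat.factorial]

end TuranDensity

/-- The Turán density of `F = K4⁻ × F*` equals `2/9`. -/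
theorem turan_density_F :
    ∀ ε : ℝ, 0 < ε → ∃ N : ℕ, ∀ n : ℕ, N ≤ n →
      (2 / 9 - ε) * (n.choose 3 : ℝ) ≤ (exF n : ℝ) ∧
        (exF n : ℝ) ≤ (2 / 9 + ε) * (n.choose 3 : ℝ) := by
  intro ε hε
  have hmem : Set.Icc (2 / 9 - ε) (2 / 9 + ε) ∈ nhds (2 / 9 : ℝ) :=
    Icc_mem_nhds (sub_lt_self _ hε) (lt_add_of_pos_right _ hε)
  obtain ⟨N, hN⟩ := Filter.eventually_atTop.mp
    ((tendsto_exF_div_choose.eventually hmem).and (Filter.eventually_ge_atTop 3))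
  refine ⟨N, fun n hn => ?_⟩
  obtain ⟨⟨hlower, hupper⟩, hn3⟩ := hN n hn
  have hpos : (0 : ℝ) < n.choose 3 := by exact_mod_cast Nat.choose_pos hn3
  exact ⟨(le_div_iff₀ hpos).mp hlower, (div_le_iff₀ hpos).mp hupper⟩
end

section
/- Let M be a 3×3 matrix with entries in {0,1} such that for every permutation σ of {1,2,3} one has M_{1,σ(1)} + M_{2,σ(2)} + M_{3,σ(3)} = 1 (as integers). Then either there is a row i with M_{i,j} = 1 for all j and M_{i',j} = 0 for all i' ≠ i and all j, or there is a column j with M_{i,j} = 1 for all i and M_{i,j'} = 0 for all j' ≠ j and all i. -/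
/-!
If every permutation diagonal of `M` has the same sum, then composing a permutation with a
transposition gives the exchange identity `M i j + M k l = M i l + M k j`: any two rows differ by a
constant. Nonnegative integer entries with diagonal sum `1` are all `0` or `1`, so a row containing
both values leaves no room for a nonzero constant: either every row is constant or all rows
coincide. The sum along the main diagonal then singles out the row or column of ones.
-/

section DiagonalSum

variable {ι A : Type*} [Fintype ι] [AddCommMonoid A] [IsCancelAdd A] {M : ι → ι → A} {c : A}

lemma add_eq_add_swap_of_sum_perm_eq (h : ∀ σ : Equiv.Perm ι, ∑ i, M i (σ i) = c)
    (σ : Equiv.Perm ι) {i k : ι} (hik : i ≠ k) :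
    M i (σ i) + M k (σ k) = M i (σ k) + M k (σ i) := by
  classical
  have hsum := (h σ).trans (h (σ * Equiv.swap i k)).symm
  have hrest : ∑ x ∈ {i, k}ᶜ, M x ((σ * Equiv.swap i k) x) = ∑ x ∈ {i, k}ᶜ, M x (σ x) := by
    refine Finset.sum_congr rfl fun x hx ↦ ?_
    obtain ⟨hxi, hxk⟩ : x ≠ i ∧ x ≠ k := by simpa using hx
    rw [Equiv.Perm.mul_apply, Equiv.swap_apply_of_ne_of_ne hxi hxk]
  rw [← Finset.sum_add_sum_compl {i, k} fun x ↦ M x (σ x),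
    ← Finset.sum_add_sum_compl {i, k} fun x ↦ M x ((σ * Equiv.swap i k) x),
    hrest, add_left_inj, Finset.sum_pair hik, Finset.sum_pair hik] at hsum
  simpa using hsum

lemma exchange_of_sum_perm_eq (h : ∀ σ : Equiv.Perm ι, ∑ i, M i (σ i) = c) (i k j l : ι) :
    M i j + M k l = M i l + M k j := by
  rcases eq_or_ne i k with rfl | hik
  · exact add_comm _ _
  rcases eq_or_ne j l with rfl | hjl
  · rfl
  obtain ⟨σ, rfl, rfl⟩ : ∃ σ : Equiv.Perm ι, σ i = j ∧ σ k = l :=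
    MulAction.is_two_pretransitive_iff.mp (Equiv.Perm.isMultiplyPretransitive ι 2) hik hjl
  exact add_eq_add_swap_of_sum_perm_eq h σ hik

end DiagonalSum

lemma le_of_sum_perm_eq {ι A : Type*} [Fintype ι] [AddCommMonoid A] [PartialOrder A]
    [IsOrderedAddMonoid A] {M : ι → ι → A} {c : A} (hM : ∀ i j, 0 ≤ M i j)
    (h : ∀ σ : Equiv.Perm ι, ∑ i, M i (σ i) = c) (i j : ι) : M i j ≤ c := by
  classical
  calc M i j = M i (Equiv.swap i j i) := by rw [Equiv.swap_apply_left]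
    _ ≤ ∑ k, M k (Equiv.swap i j k) :=
      Finset.single_le_sum (f := fun k ↦ M k (Equiv.swap i j k)) (fun k _ ↦ hM k _)
        (Finset.mem_univ i)
    _ = c := h _

lemma rows_const_or_cols_const_of_exchange {ι κ : Type*} {M : ι → κ → ℤ}
    (hM₀ : ∀ i j, 0 ≤ M i j) (hM₁ : ∀ i j, M i j ≤ 1)
    (hexch : ∀ i k j l, M i j + M k l = M i l + M k j) :
    (∀ i j l, M i j = M i l) ∨ ∀ i k j, M i j = M k j := by
  refine or_iff_not_imp_left.mpr fun hrows ↦ ?_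
  push Not at hrows
  obtain ⟨i₀, j₀, l₀, hne⟩ := hrows
  have hcol (k : ι) : M k j₀ = M i₀ j₀ := by
    have hdiff : M k j₀ - M k l₀ = M i₀ j₀ - M i₀ l₀ := by linarith [hexch i₀ k j₀ l₀]
    grind
  intro i k j
  linarith [hexch i k j j₀, hcol i, hcol k]

lemma exists_eq_one_and_forall_ne_eq_zero_of_sum_eq_one {ι : Type*} [Fintype ι] {f : ι → ℤ}
    (hf : ∀ i, 0 ≤ f i) (hsum : ∑ i, f i = 1) : ∃ i, f i = 1 ∧ ∀ k ≠ i, f k = 0 := by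
  classical
  obtain ⟨i, -, hi⟩ := Finset.exists_ne_zero_of_sum_ne_zero (hsum.trans_ne one_ne_zero)
  have hpos : 0 < f i := (hf i).lt_of_ne' hi
  have hsplit : f i + ∑ k ∈ Finset.univ.erase i, f k = 1 :=
    (Finset.add_sum_erase _ f (Finset.mem_univ i)).trans hsum
  have hrest : 0 ≤ ∑ k ∈ Finset.univ.erase i, f k := Finset.sum_nonneg fun k _ ↦ hf k
  have hrest_zero : ∑ k ∈ Finset.univ.erase i, f k = 0 := by omega
  refine ⟨i, by omega, fun k hk ↦ ?_⟩
  exact (Finset.sum_eq_zero_iff_of_nonneg fun k _ ↦ hf k).mp hrest_zero k (by simpa using hk)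

theorem matrix_three_by_three_general {ι : Type*} [Fintype ι] (M : ι → ι → ℤ)
    (hM : ∀ i j, 0 ≤ M i j) (hdiag : ∀ σ : Equiv.Perm ι, ∑ i, M i (σ i) = 1) :
    (∃ i, (∀ j, M i j = 1) ∧ ∀ i', i' ≠ i → ∀ j, M i' j = 0) ∨
      (∃ j, (∀ i, M i j = 1) ∧ ∀ j', j' ≠ j → ∀ i, M i j' = 0) := by
  obtain ⟨i, hone, hzero⟩ :=
    exists_eq_one_and_forall_ne_eq_zero_of_sum_eq_one (fun i ↦ hM i i) (hdiag 1)
  refine (rows_const_or_cols_const_of_exchange hM (le_of_sum_perm_eq hM hdiag)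
    (exchange_of_sum_perm_eq hdiag)).imp (fun hrows ↦ ?_) (fun hcols ↦ ?_)
  · exact ⟨i, fun j ↦ (hrows i j i).trans hone, fun k hk j ↦ (hrows k j k).trans (hzero k hk)⟩
  · exact ⟨i, fun k ↦ (hcols k i i).trans hone, fun l hl k ↦ (hcols k l l).trans (hzero l hl)⟩

/-- If a 3×3 zero-one matrix has every permutation-diagonal sum equal to 1, then its
three 1s fill a single row (with all other entries 0) or a single column. -/
theorem matrix_three_by_three (M : Fin 3 → Fin 3 → ℤ)
    (h01 : ∀ i j, M i j = 0 ∨ M i j = 1)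
    (hdiag : ∀ σ : Equiv.Perm (Fin 3), M 0 (σ 0) + M 1 (σ 1) + M 2 (σ 2) = 1) :
    (∃ i, (∀ j, M i j = 1) ∧ ∀ i', i' ≠ i → ∀ j, M i' j = 0) ∨
      (∃ j, (∀ i, M i j = 1) ∧ ∀ j', j' ≠ j → ∀ i, M i j' = 0) :=
  matrix_three_by_three_general M (fun i j ↦ by grind [h01 i j]) fun σ ↦
    (Fin.sum_univ_three _).trans (hdiag σ)
end

section
/- Let M be a 4×3 matrix with entries in {0,1}, rows indexed by a, b, c, d and columns by {1,2,3}. Suppose that for each of the three row-triples {a,b,c}, {a,b,d}, {a,c,d}, the corresponding 3×3 submatrix satisfies: for every bijection σ from the row-triple to {1,2,3}, the sum of the three entries M_{r,σ(r)} over rows r in the triple equals 1 (as integers). Then one of the following holds: (i) every entry in row a is 1 and every entry in rows b, c, d is 0; or (ii) there is a column j with every entry in column j equal to 1 and all entries in the other two columns equal to 0. -/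
/-!
Two transversals of a row set that differ by exchanging the columns of two rows have equal sums, so
`M r x + M s y = M r y + M s x` whenever the rows `r, s` lie in a common row set with constant
transversal sum. When any two rows do, `M` has the form `u r + v x`, and a matrix of this form with
entries in `{0, 1}` cannot vary in both directions: either all its rows or all its columns are
constant. If the columns are constant, a transversal sum is the sum of a row, so exactly one column
consists of ones. If the rows are constant, the sum of the `u r` over all rows but `i` is `1` for
each `i ≠ a`, so `u i` is the same for all `i ≠ a`; since no such sum has two terms equal to `1`,
this common value is `0`, and `u a = 1`.
-/

open Finset

section ZeroOne

variable {α R : Type*} [AddCommMonoidWithOne R] [CharZero R]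

theorem exists_mem_eq_one_of_sum_eq_one {s : Finset α} {f : α → R}
    (hf : ∀ i ∈ s, f i = 0 ∨ f i = 1) (hsum : ∑ i ∈ s, f i = 1) :
    ∃ i ∈ s, f i = 1 ∧ ∀ j ∈ s, j ≠ i → f j = 0 := by
  classical
  have hcard : #{i ∈ s | f i = 1} = 1 := by
    rw [← Nat.cast_inj (R := R), natCast_card_filter, Nat.cast_one]
    refine (sum_congr rfl fun i hi => ?_).trans hsum
    rcases hf i hi with h | h <;> simp [h]
  obtain ⟨i, hi⟩ := card_eq_one.mp hcard
  have mem_iff (j : α) : j ∈ s ∧ f j = 1 ↔ j = i := by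
    simpa using Finset.ext_iff.mp hi j
  obtain ⟨his, hfi⟩ := (mem_iff i).mpr rfl
  exact ⟨i, his, hfi, fun j hj hji =>
    (hf j hj).resolve_right fun h => hji ((mem_iff j).mp ⟨hj, h⟩)⟩

theorem eq_one_and_eq_zero_of_sum_compl_singleton_eq_one [IsCancelAdd R] [Fintype α]
    [DecidableEq α] {u : α → R} {a : α} (hα : 4 ≤ Fintype.card α)
    (hu : ∀ i, u i = 0 ∨ u i = 1) (hsum : ∀ i ≠ a, ∑ r ∈ {i}ᶜ, u r = 1) :
    u a = 1 ∧ ∀ i ≠ a, u i = 0 := by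
  have hrest : 2 < #({a}ᶜ : Finset α) := by
    rw [card_compl, card_singleton]
    omega
  obtain ⟨i, hi, j, hj, k, hk, hij, hik, hjk⟩ := two_lt_card.mp hrest
  rw [mem_compl, mem_singleton] at hi hj hk
  have total (l : α) (hl : l ≠ a) : u l + 1 = ∑ r, u r := by
    rw [← hsum l hl, Fintype.sum_eq_add_sum_compl l]
  have eq_of_ne (l m : α) (hl : l ≠ a) (hm : m ≠ a) : u l = u m :=
    add_right_cancel ((total l hl).trans (total m hm).symm)
  obtain ⟨b, -, hb, hzero⟩ :=
    exists_mem_eq_one_of_sum_eq_one (fun r _ => hu r) (hsum i hi)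
  have hjk_zero : u j = 0 := by
    by_cases hjb : j = b
    · rw [eq_of_ne j k hj hk]
      exact hzero k (by simpa using hik.symm) (hjb ▸ hjk.symm)
    · exact hzero j (by simpa using hij.symm) hjb
  have off_zero (l : α) (hl : l ≠ a) : u l = 0 := (eq_of_ne l j hl hj).trans hjk_zero
  have hba : b = a := by
    by_contra hba
    exact one_ne_zero (hb.symm.trans (off_zero b hba))
  exact ⟨hba ▸ hb, off_zero⟩

end ZeroOne

section Matrix

variable {ι κ R : Type*}

/-- A *sum matrix* is one of the form `M r x = u r + v x`; it is encoded by the exchange identity,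
which avoids both the choice of `u` and `v` and subtraction in `R`. -/
def IsSumMatrix [Add R] (M : ι → κ → R) : Prop :=
  ∀ r s x y, M r x + M s y = M s x + M r y

namespace IsSumMatrix

variable {M : ι → κ → R}

theorem apply_eq_of_apply_eq [Add R] [IsLeftCancelAdd R] (hM : IsSumMatrix M) {r s : ι} {x : κ}
    (h : M r x = M s x) (y : κ) : M r y = M s y := by
  have exchange := hM r s x y
  rw [h] at exchange
  exact (add_left_cancel exchange).symm

variable [AddCommMonoidWithOne R] [CharZero R]

theorem apply_eq_one_of_apply_eq_one (hM : IsSumMatrix M) (h01 : ∀ i j, M i j = 0 ∨ M i j = 1)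
    {r : ι} {x y : κ} (hx : M r x = 1) (hy : M r y = 0) (s : ι) : M s x = 1 := by
  have exchange : 1 + M s y = M s x := by simpa [hx, hy] using hM r s x y
  refine (h01 s x).resolve_left fun hsx => ?_
  rcases h01 s y with hsy | hsy <;> rw [hsx, hsy] at exchange
  · exact one_ne_zero ((add_zero 1).symm.trans exchange)
  · exact two_ne_zero (one_add_one_eq_two.symm.trans exchange)

theorem rows_constant_or_columns_constant [IsCancelAdd R] (hM : IsSumMatrix M)
    (h01 : ∀ i j, M i j = 0 ∨ M i j = 1) :
    (∀ r x y, M r x = M r y) ∨ ∀ r s x, M r x = M s x := by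
  by_cases hvary : ∃ r x y, M r x = 1 ∧ M r y = 0
  · obtain ⟨r, x, y, hx, hy⟩ := hvary
    have column_one (s : ι) : M s x = 1 := hM.apply_eq_one_of_apply_eq_one h01 hx hy s
    exact .inr fun s t =>
      hM.apply_eq_of_apply_eq ((column_one s).trans (column_one t).symm)
  · push Not at hvary
    refine .inl fun r x y => ?_
    rcases h01 r x with hx | hx <;> rcases h01 r y with hy | hy
    · rw [hx, hy]
    · exact absurd hx (hvary r y x hy)
    · exact absurd hy (hvary r x y hx)
    · rw [hx, hy]

end IsSumMatrix

/-- Every transversal of the rows `S`, that is, every choice of one entry from each row in `S`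
with no two in the same column, has sum `c`. Columns are chosen by a map on all of `ι`, of which
only the values on `S` matter. -/
def HasTransversalSum [AddCommMonoid R] (M : ι → κ → R) (S : Finset ι) (c : R) : Prop :=
  ∀ σ : ι → κ, Set.InjOn σ S → ∑ r ∈ S, M r (σ r) = c

namespace HasTransversalSum

variable {M : ι → κ → R} {S : Finset ι} {c : R} {σ : ι → κ}

theorem exchange [AddCommMonoid R] [IsCancelAdd R] (hM : HasTransversalSum M S c)
    (hσ : Set.InjOn σ S) {r s : ι} (hr : r ∈ S) (hs : s ∈ S) (x y : κ) :
    M r x + M s y = M s x + M r y := by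
  classical
  rcases eq_or_ne r s with rfl | hrs
  · rfl
  rcases eq_or_ne x y with rfl | hxy
  · exact add_comm _ _
  obtain ⟨g, hgr, hgs⟩ := MulAction.is_two_pretransitive_iff.mp
    (Equiv.Perm.isMultiplyPretransitive κ 2) (hσ.ne hr hs hrs) hxy
  let τ : ι → κ := g ∘ σ
  have hτ : Set.InjOn τ S := g.injective.comp_injOn hσ
  let τ' : ι → κ := Equiv.swap x y ∘ τ
  have hτ' : Set.InjOn τ' S := (Equiv.swap x y).injective.comp_injOn hτ
  have hτr : τ r = x := hgr
  have hτs : τ s = y := hgs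
  have hτ'r : τ' r = y := by simp [τ', hτr]
  have hτ's : τ' s = x := by simp [τ', hτs]
  have sum_split (f : ι → R) : ∑ t ∈ S, f t = f r + f s + ∑ t ∈ (S.erase r).erase s, f t := by
    rw [add_assoc, add_sum_erase _ _ (mem_erase.mpr ⟨hrs.symm, hs⟩), add_sum_erase _ _ hr]
  have sum_off : ∑ t ∈ (S.erase r).erase s, M t (τ' t) =
      ∑ t ∈ (S.erase r).erase s, M t (τ t) := by
    refine sum_congr rfl fun t ht => ?_
    obtain ⟨hts, htr, htS⟩ : t ≠ s ∧ t ≠ r ∧ t ∈ S := by simpa only [mem_erase] using ht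
    have hτ't : τ' t = τ t :=
      Equiv.swap_apply_of_ne_of_ne (hτr ▸ hτ.ne htS hr htr) (hτs ▸ hτ.ne htS hs hts)
    rw [hτ't]
  have hsum := (hM τ hτ).trans (hM τ' hτ').symm
  rw [sum_split, sum_split fun t => M t (τ' t), sum_off, hτr, hτs, hτ'r, hτ's] at hsum
  exact (add_right_cancel hsum).trans (add_comm _ _)

theorem sum_row_eq [AddCommMonoid R] [Fintype κ] (hM : HasTransversalSum M S c)
    (hσ : Set.InjOn σ S) (hS : #S = Fintype.card κ) (hconst : ∀ r s x, M r x = M s x) (r : ι) :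
    ∑ x, M r x = c := by
  have hsurj : Set.SurjOn σ S (univ : Finset κ) :=
    surjOn_of_injOn_of_card_le σ (fun _ _ => mem_coe.mpr (mem_univ _)) hσ hS.ge
  rw [← hM σ hσ]
  exact (sum_nbij σ (fun _ _ => mem_univ _) hσ hsurj fun s _ => hconst s r (σ s)).symm

theorem sum_column_eq [AddCommMonoid R] (hM : HasTransversalSum M S c)
    (hσ : Set.InjOn σ S) (hconst : ∀ r x y, M r x = M r y) (x : κ) :
    ∑ r ∈ S, M r x = c :=
  (sum_congr rfl fun r _ => hconst r x (σ r)).trans (hM σ hσ)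

end HasTransversalSum

theorem exists_injOn_of_card_le [Nonempty κ] [Fintype κ] {S : Finset ι}
    (hS : #S ≤ Fintype.card κ) : ∃ σ : ι → κ, Set.InjOn σ S := by
  obtain ⟨f⟩ : Nonempty (S ↪ κ) :=
    Function.Embedding.nonempty_of_card_le ((Fintype.card_coe S).trans_le hS)
  exact Set.exists_injOn_iff_injective.mpr ⟨f, f.injective⟩

variable [Fintype ι] [DecidableEq ι]

theorem isSumMatrix_of_hasTransversalSum_compl_singleton [AddCommMonoid R] [IsCancelAdd R]
    {M : ι → κ → R} {a : ι} {c : R} (hι : 4 ≤ Fintype.card ι)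
    (hinj : ∀ i ≠ a, ∃ σ : ι → κ, Set.InjOn σ ({i}ᶜ : Finset ι))
    (hM : ∀ i ≠ a, HasTransversalSum M {i}ᶜ c) : IsSumMatrix M := by
  intro r s
  obtain ⟨i, -, hi⟩ : ∃ i ∈ univ, i ∉ ({a, r, s} : Finset ι) :=
    exists_mem_notMem_of_card_lt_card (card_le_three.trans_lt hι)
  obtain ⟨hia, hir, his⟩ : i ≠ a ∧ i ≠ r ∧ i ≠ s := by simpa using hi
  obtain ⟨σ, hσ⟩ := hinj i hia
  exact (hM i hia).exchange hσ (by simpa using hir.symm) (by simpa using his.symm)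

theorem matrix_four_by_three_general [Fintype κ] [AddCommMonoidWithOne R] [IsCancelAdd R]
    [CharZero R] (hκ : 3 ≤ Fintype.card κ) (hι : Fintype.card ι = Fintype.card κ + 1) (a : ι)
    (M : ι → κ → R) (h01 : ∀ i j, M i j = 0 ∨ M i j = 1)
    (hM : ∀ i ≠ a, HasTransversalSum M {i}ᶜ 1) :
    ((∀ j, M a j = 1) ∧ ∀ i, i ≠ a → ∀ j, M i j = 0) ∨
      (∃ j, (∀ i, M i j = 1) ∧ ∀ j', j' ≠ j → ∀ i, M i j' = 0) := by
  have : Nonempty κ := Fintype.card_pos_iff.mp (by omega)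
  have card_compl_eq (i : ι) : #({i}ᶜ : Finset ι) = Fintype.card κ := by
    rw [card_compl, card_singleton, hι, Nat.add_sub_cancel]
  have exists_injOn (i : ι) : ∃ σ : ι → κ, Set.InjOn σ ({i}ᶜ : Finset ι) :=
    exists_injOn_of_card_le (card_compl_eq i).le
  have hsum : IsSumMatrix M :=
    isSumMatrix_of_hasTransversalSum_compl_singleton (by omega) (fun i _ => exists_injOn i) hM
  rcases hsum.rows_constant_or_columns_constant h01 with hconst | hconst
  · have column (j : κ) : M a j = 1 ∧ ∀ i ≠ a, M i j = 0 := by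
      refine eq_one_and_eq_zero_of_sum_compl_singleton_eq_one (by omega) (h01 · j) fun i hi => ?_
      obtain ⟨σ, hσ⟩ := exists_injOn i
      exact (hM i hi).sum_column_eq hσ hconst j
    exact .inl ⟨fun j => (column j).1, fun i hi j => (column j).2 i hi⟩
  · obtain ⟨i, hi⟩ := Fintype.exists_ne_of_one_lt_card (by omega) a
    obtain ⟨σ, hσ⟩ := exists_injOn i
    obtain ⟨j, -, hj, hzero⟩ := exists_mem_eq_one_of_sum_eq_one (fun j _ => h01 a j)
      ((hM i hi).sum_row_eq hσ (card_compl_eq i) hconst a)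
    exact .inr ⟨j, fun r => (hconst r a j).trans hj,
      fun j' hj' r => (hconst r a j').trans (hzero j' (mem_univ j') hj')⟩

end Matrix

/-- Rows are `a=0, b=1, c=2, d=3`.  If for each of the row-triples `abc`, `abd`, `acd`
every bijection `σ` from the triple to the three columns gives
`∑ M r (σ r) = 1`, then either row `a` is all 1s and the other rows are all 0s, or some
column is all 1s and the other columns are all 0s. -/
theorem matrix_four_by_three (M : Fin 4 → Fin 3 → ℤ)
    (h01 : ∀ i j, M i j = 0 ∨ M i j = 1)
    (hdiag : ∀ S ∈ ({{0, 1, 2}, {0, 1, 3}, {0, 2, 3}} : Set (Finset (Fin 4))),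
      ∀ σ : Fin 4 → Fin 3, Set.InjOn σ ↑S → ∑ r ∈ S, M r (σ r) = 1) :
    ((∀ j, M 0 j = 1) ∧ ∀ i, i ≠ 0 → ∀ j, M i j = 0) ∨
      (∃ j, (∀ i, M i j = 1) ∧ ∀ j', j' ≠ j → ∀ i, M i j' = 0) := by
  have mem_triples : ∀ i : Fin 4, i ≠ 0 →
      ({i}ᶜ : Finset (Fin 4)) = {0, 1, 2} ∨ ({i}ᶜ : Finset (Fin 4)) = {0, 1, 3} ∨
        ({i}ᶜ : Finset (Fin 4)) = {0, 2, 3} := by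
    decide
  exact matrix_four_by_three_general (by simp) (by simp) 0 M h01 fun i hi =>
    hdiag _ (mem_triples i hi)
end
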